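/- Let L ≥ 2 and 1 ≤ j ≤ L−1. Conjugation by the Kennedy–Tasaki transformation maps the Heisenberg bond to: U_KT (Sˣ_jSˣ_{j+1}+Sʸ_jSʸ_{j+1}+Sᶻ_jSᶻ_{j+1}) U_KT = −Sˣ_jSˣ_{j+1} + Sʸ_j exp(iπ(Sᶻ_j + Sˣ_{j+1})) Sʸ_{j+1} − Sᶻ_jSᶻ_{j+1}. -/

import Mathlib

noncomputable section
open Complex Matrix

/-- The Hilbert space operators of the `L`-site spin-1 chain: matrices on `(ℂ³)^{⊗L}`,
with the tensor factors indexed by sites and the single-site ordered basis `(|+⟩,|0⟩,|−⟩)`. -/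
abbrev Op (L : ℕ) : Type := Matrix (Fin L → Fin 3) (Fin L → Fin 3) ℂ

/-- The spin-1 matrix `Sˣ`. -/
def Sx : Matrix (Fin 3) (Fin 3) ℂ :=
  ((Real.sqrt 2 : ℝ) : ℂ)⁻¹ • !![0, 1, 0; 1, 0, 1; 0, 1, 0]

/-- The spin-1 matrix `Sʸ`. -/
def Sy : Matrix (Fin 3) (Fin 3) ℂ :=
  ((Real.sqrt 2 : ℝ) : ℂ)⁻¹ • !![0, -I, 0; I, 0, -I; 0, I, 0]

/-- The spin-1 matrix `Sᶻ = diag(1,0,−1)`. -/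
def Sz : Matrix (Fin 3) (Fin 3) ℂ := !![1, 0, 0; 0, 0, 0; 0, 0, -1]

/-- `site A j` is the one-site operator `A` acting on site `j` and identity elsewhere. -/
def site {L : ℕ} (A : Matrix (Fin 3) (Fin 3) ℂ) (j : Fin L) : Op L :=
  Matrix.of fun f g => ∏ k : Fin L, if k = j then A (f k) (g k) else (if f k = g k then 1 else 0)

/-- One factor `exp(iπ Sᶻ_u Sˣ_v)` of the Kennedy–Tasaki transformation. -/
def ktFactor {L : ℕ} (u v : Fin L) : Op L :=
  NormedSpace.exp (((Real.pi : ℂ) * I) • (site Sz u * site Sx v))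

/-- The Kennedy–Tasaki transformation `U_KT = ∏_{1 ≤ u < v ≤ L} exp(iπ Sᶻ_u Sˣ_v)`
(the factors pairwise commute, so the ordering is immaterial). -/
def UKT (L : ℕ) : Op L :=
  ((List.finRange L).map fun u =>
    ((List.finRange L).map fun v => if u < v then ktFactor u v else 1).prod).prod

/-- The p-wave basis vector `|↑⟩ = (|+⟩ − |−⟩)/√2`. -/
def up : Fin 3 → ℂ := ![((Real.sqrt 2 : ℝ) : ℂ)⁻¹, 0, -((Real.sqrt 2 : ℝ) : ℂ)⁻¹]

/-- The p-wave basis vector `|↓⟩ = |0⟩`. -/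
def down : Fin 3 → ℂ := ![0, 1, 0]

/-- The p-wave basis vector `|h⟩ = (|+⟩ + |−⟩)/√2`. -/
def hole : Fin 3 → ℂ := ![((Real.sqrt 2 : ℝ) : ℂ)⁻¹, 0, ((Real.sqrt 2 : ℝ) : ℂ)⁻¹]

/-- The rank-one operator `|a⟩⟨b|`. -/
def ketbra (a b : Fin 3 → ℂ) : Matrix (Fin 3) (Fin 3) ℂ := Matrix.vecMulVec a (star b)

/-- `σˣ = |↑⟩⟨↓| + |↓⟩⟨↑|` (annihilating `|h⟩`). -/
def sigx : Matrix (Fin 3) (Fin 3) ℂ := ketbra up down + ketbra down up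

/-- `σʸ = −i|↑⟩⟨↓| + i|↓⟩⟨↑|` (annihilating `|h⟩`). -/
def sigy : Matrix (Fin 3) (Fin 3) ℂ := (-I) • ketbra up down + I • ketbra down up

/-- `σᶻ = |↑⟩⟨↑| − |↓⟩⟨↓|` (annihilating `|h⟩`). -/
def sigz : Matrix (Fin 3) (Fin 3) ℂ := ketbra up up - ketbra down down

/-- `n = |↑⟩⟨↑| + |↓⟩⟨↓|` (annihilating `|h⟩`). -/
def nMat : Matrix (Fin 3) (Fin 3) ℂ := ketbra up up + ketbra down down

/-- `h = |h⟩⟨h|`. -/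
def hMat : Matrix (Fin 3) (Fin 3) ℂ := ketbra hole hole

/-- `P = ⊗_{j=1}^L n_j`, the orthogonal projection onto the hole-free subspace. -/
def Pproj (L : ℕ) : Op L := Matrix.of fun f g => ∏ k : Fin L, nMat (f k) (g k)

/-- The Heisenberg coupling `S_j · S_k`. -/
def heis {L : ℕ} (j k : Fin L) : Op L :=
  site Sx j * site Sx k + site Sy j * site Sy k + site Sz j * site Sz k

/-- The bilinear-biquadratic Hamiltonian
`H_BLBQ(θ) = Σ_{j=1}^{L−1} [cosθ (S_j·S_{j+1}) + sinθ (S_j·S_{j+1})²]`. -/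
def HBLBQ (L : ℕ) (θ : ℝ) : Op L :=
  ∑ j : Fin L, if h : (j : ℕ) + 1 < L then
    ((Real.cos θ : ℝ) : ℂ) • heis j ⟨(j : ℕ) + 1, h⟩
      + ((Real.sin θ : ℝ) : ℂ) • (heis j ⟨(j : ℕ) + 1, h⟩) ^ 2
  else 0

/-- The self-dual Hamiltonian `H_SD(θ) = H_BLBQ(θ) + U_KT H_BLBQ(θ) U_KT`. -/
def HSD (L : ℕ) (θ : ℝ) : Op L := HBLBQ L θ + UKT L * HBLBQ L θ * UKT L

/-- The spin-1/2 XXZ Hamiltonian written in the p-wave basis: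
`H_XXZ(θ) = (cosθ−sinθ) Σ_j (−σˣ_jσˣ_{j+1} + σʸ_jσʸ_{j+1}) + sinθ Σ_j σᶻ_jσᶻ_{j+1}`. -/
def HXXZ (L : ℕ) (θ : ℝ) : Op L :=
  ((Real.cos θ - Real.sin θ : ℝ) : ℂ) •
    (∑ j : Fin L, if h : (j : ℕ) + 1 < L then
      -(site sigx j * site sigx ⟨(j : ℕ) + 1, h⟩) + site sigy j * site sigy ⟨(j : ℕ) + 1, h⟩
    else 0)
  + ((Real.sin θ : ℝ) : ℂ) •
    (∑ j : Fin L, if h : (j : ℕ) + 1 < L then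
      site sigz j * site sigz ⟨(j : ℕ) + 1, h⟩
    else 0)

/-- The global product `∏_{j=1}^L exp(c • A_j)` of commuting single-site exponentials. -/
def globalProd (L : ℕ) (A : Matrix (Fin 3) (Fin 3) ℂ) (c : ℂ) : Op L :=
  ((List.finRange L).map fun j => NormedSpace.exp (c • site A j)).prod

/-- The symmetry flux `F^y_j = exp(−iπ Σ_{k<j} Sʸ_k) · Sʸ_j`. -/
def fluxY (L : ℕ) (j : Fin L) : Op L :=
  NormedSpace.exp ((-((Real.pi : ℂ) * I)) •
    ∑ k : Fin L, if (k : ℕ) < (j : ℕ) then site Sy k else 0) * site Sy j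


/-- Tensor product of one-site operators. -/
def tens {L : ℕ} (M : Fin L → Matrix (Fin 3) (Fin 3) ℂ) : Op L :=
  Matrix.of fun f g => ∏ k : Fin L, M k (f k) (g k)

theorem tens_mul {L : ℕ} (M N : Fin L → Matrix (Fin 3) (Fin 3) ℂ) :
    tens M * tens N = tens (fun k => M k * N k) := by
  ext f g
  simp only [tens, Matrix.mul_apply, Matrix.of_apply, ← Finset.prod_mul_distrib]
  rw [Finset.prod_univ_sum]
  simp

theorem site_eq_tens {L : ℕ} (A : Matrix (Fin 3) (Fin 3) ℂ) (j : Fin L) :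
    site A j = tens (fun k => if k = j then A else 1) := by
  ext f g
  simp only [site, tens, Matrix.of_apply]
  refine Finset.prod_congr rfl fun k _ => ?_
  split_ifs with h1 h2 <;> simp_all [Matrix.one_apply]

theorem site_mul {L : ℕ} (A B : Matrix (Fin 3) (Fin 3) ℂ) (j : Fin L) :
    site A j * site B j = site (A * B) j := by
  simp only [site_eq_tens, tens_mul]
  congr 1
  funext k
  split_ifs <;> simp

theorem site_comm {L : ℕ} (A B : Matrix (Fin 3) (Fin 3) ℂ) {j k : Fin L} (h : j ≠ k) :
    Commute (site A j) (site B k) := by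
  unfold Commute SemiconjBy
  simp only [site_eq_tens, tens_mul]
  congr 1
  funext l
  split_ifs <;> simp_all

theorem site_one {L : ℕ} (j : Fin L) : site 1 j = (1 : Op L) := by
  ext f g
  simp only [site, Matrix.of_apply, Matrix.one_apply, ite_self]
  rw [Finset.prod_ite_zero]
  simp [funext_iff]

theorem site_entry {L : ℕ} (A : Matrix (Fin 3) (Fin 3) ℂ) (j : Fin L) (f g : Fin L → Fin 3) :
    site A j f g = A (f j) (g j) * ∏ k ∈ Finset.univ.erase j, (if f k = g k then 1 else 0) := by
  simp only [site, Matrix.of_apply]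
  rw [← Finset.mul_prod_erase _ _ (Finset.mem_univ j)]
  simp only [if_true]
  congr 1
  refine Finset.prod_congr rfl fun k hk => ?_
  rw [if_neg (Finset.ne_of_mem_erase hk)]

theorem site_add {L : ℕ} (A B : Matrix (Fin 3) (Fin 3) ℂ) (j : Fin L) :
    site (A + B) j = site A j + site B j := by
  ext f g
  simp only [site_entry, Matrix.add_apply, add_mul]

theorem site_sub {L : ℕ} (A B : Matrix (Fin 3) (Fin 3) ℂ) (j : Fin L) :
    site (A - B) j = site A j - site B j := by
  ext f g
  simp only [site_entry, Matrix.sub_apply, sub_mul]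

theorem exp_cube {n : Type} [Fintype n] [DecidableEq n] (A : Matrix n n ℂ) (hA : A * A * A = A) :
    NormedSpace.exp (((Real.pi : ℂ) * I) • A) = 1 - 2 * (A * A) := by
  set c : ℂ := (Real.pi : ℂ) * I with hc
  have h1 : HasSum (fun n : ℕ => ((n.factorial : ℂ)⁻¹ * c ^ n)) (-1) := by
    have := NormedSpace.exp_series_hasSum_exp' (𝕂 := ℂ) c
    rw [← Complex.exp_eq_exp_ℂ, hc, Complex.exp_pi_mul_I] at this
    simpa using this
  have h2 : HasSum (fun n : ℕ => ((n.factorial : ℂ)⁻¹ * (-c) ^ n)) (-1) := by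
    have := NormedSpace.exp_series_hasSum_exp' (𝕂 := ℂ) (-c)
    rw [← Complex.exp_eq_exp_ℂ, Complex.exp_neg, hc, Complex.exp_pi_mul_I] at this
    simpa using this
  have h3 : HasSum (fun n : ℕ => if n = 0 then (1 - A * A) else 0) (1 - A * A) :=
    hasSum_ite_eq 0 _
  have hp : ∀ n : ℕ, A ^ (2 * n + 1) = A ∧ A ^ (2 * n + 2) = A * A := by
    intro n
    induction n with
    | zero => simp [pow_two]
    | succ n ih =>
      have e1 : A ^ (2 * (n + 1) + 1) = A := by
        rw [show 2 * (n + 1) + 1 = (2 * n + 2) + 1 by ring, pow_succ, ih.2, hA]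
      refine ⟨e1, ?_⟩
      rw [show 2 * (n + 1) + 2 = (2 * (n + 1) + 1) + 1 by ring, pow_succ, e1]
  have h4 := ((h1.smul_const ((1 / 2 : ℂ) • (A * A + A))).add
    (h2.smul_const ((1 / 2 : ℂ) • (A * A - A)))).add h3
  rw [NormedSpace.exp_eq_tsum ℂ]
  have h5 : (fun n : ℕ => ((n.factorial : ℂ)⁻¹) • (c • A) ^ n) = fun n : ℕ =>
      ((n.factorial : ℂ)⁻¹ * c ^ n) • ((1 / 2 : ℂ) • (A * A + A)) +
      ((n.factorial : ℂ)⁻¹ * (-c) ^ n) • ((1 / 2 : ℂ) • (A * A - A)) +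
      (if n = 0 then (1 - A * A) else 0) := by
    funext n
    rw [smul_pow]
    rcases Nat.even_or_odd' n with ⟨m, rfl | rfl⟩
    · rcases m with _ | m
      · simp
        module
      · have e : A ^ (2 * (m + 1)) = A * A := (hp m).2
        have e' : (-c) ^ (2 * (m + 1)) = c ^ (2 * (m + 1)) := by
          rw [pow_mul, pow_mul, neg_sq]
        rw [e, e', if_neg (by omega)]
        module
    · have e' : (-c) ^ (2 * m + 1) = - c ^ (2 * m + 1) := Odd.neg_pow ⟨m, rfl⟩ c
      rw [(hp m).1, e', if_neg (by omega)]
      module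
  simp only []
  rw [h5, h4.tsum_eq, two_mul]
  module

theorem sq2 : ((Real.sqrt 2 : ℝ) : ℂ)⁻¹ * ((Real.sqrt 2 : ℝ) : ℂ)⁻¹ = 1 / 2 := by
  rw [← mul_inv, ← Complex.ofReal_mul, Real.mul_self_sqrt (by norm_num)]
  norm_num

/-- `(Sᶻ)²`. -/
def Pz : Matrix (Fin 3) (Fin 3) ℂ := !![1, 0, 0; 0, 0, 0; 0, 0, 1]

/-- `(Sˣ)²`. -/
def Px : Matrix (Fin 3) (Fin 3) ℂ := !![1/2, 0, 1/2; 0, 1, 0; 1/2, 0, 1/2]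

theorem Sz_sq : Sz * Sz = Pz := by
  ext i j; fin_cases i <;> fin_cases j <;> simp [Sz, Pz, Matrix.mul_apply, Fin.sum_univ_three]

theorem Sx_sq : Sx * Sx = Px := by
  simp only [Sx, smul_mul_smul_comm, sq2]
  ext i j; fin_cases i <;> fin_cases j <;>
    simp [Px, Matrix.mul_apply, Fin.sum_univ_three] <;> norm_num

theorem Pz_Pz : Pz * Pz = Pz := by
  ext i j; fin_cases i <;> fin_cases j <;> simp [Pz, Matrix.mul_apply, Fin.sum_univ_three]
theorem Px_Px : Px * Px = Px := by
  ext i j; fin_cases i <;> fin_cases j <;>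
    simp [Px, Matrix.mul_apply, Fin.sum_univ_three] <;> norm_num
theorem Pz_Px : Pz * Px = Px * Pz := by
  ext i j; fin_cases i <;> fin_cases j <;> simp [Pz, Px, Matrix.mul_apply, Fin.sum_univ_three]
theorem Pz_Sz : Pz * Sz = Sz := by
  ext i j; fin_cases i <;> fin_cases j <;> simp [Pz, Sz, Matrix.mul_apply, Fin.sum_univ_three]
theorem Sz_Pz : Sz * Pz = Sz := by
  ext i j; fin_cases i <;> fin_cases j <;> simp [Pz, Sz, Matrix.mul_apply, Fin.sum_univ_three]
theorem Px_Sx : Px * Sx = Sx := by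
  ext i j; fin_cases i <;> fin_cases j <;>
    simp [Px, Sx, Matrix.mul_apply, Fin.sum_univ_three] <;> ring
theorem Sx_Px : Sx * Px = Sx := by
  ext i j; fin_cases i <;> fin_cases j <;>
    simp [Px, Sx, Matrix.mul_apply, Fin.sum_univ_three] <;> ring
theorem Pz_Sx : Pz * Sx = Sx - Sx * Pz := by
  ext i j; fin_cases i <;> fin_cases j <;> simp [Pz, Sx, Matrix.mul_apply, Fin.sum_univ_three]
theorem Pz_Sy : Pz * Sy = Sy - Sy * Pz := by
  ext i j; fin_cases i <;> fin_cases j <;> simp [Pz, Sy, Matrix.mul_apply, Fin.sum_univ_three]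
theorem Px_Sz : Px * Sz = Sz - Sz * Px := by
  ext i j; fin_cases i <;> fin_cases j <;>
    simp [Px, Sz, Matrix.mul_apply, Fin.sum_univ_three] <;> norm_num
theorem Px_Sy : Px * Sy = Sy - Sy * Px := by
  ext i j; fin_cases i <;> fin_cases j <;>
    simp [Px, Sy, Matrix.mul_apply, Fin.sum_univ_three] <;> ring

/-- Explicit form of the factors. -/
def Fk {L : ℕ} (u v : Fin L) : Op L := 1 - 2 * (site Pz u * site Px v)

theorem PzPx_comm {L : ℕ} (u v : Fin L) : Commute (site Pz u) (site Px v) := by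
  by_cases h : u = v
  · subst h
    unfold Commute SemiconjBy
    rw [site_mul, site_mul, Pz_Px]
  · exact site_comm _ _ h

theorem site_self_comm {L : ℕ} (A : Matrix (Fin 3) (Fin 3) ℂ) (u v : Fin L) :
    Commute (site A u) (site A v) := by
  by_cases h : u = v
  · subst h; exact Commute.refl _
  · exact site_comm _ _ h

theorem ktFactor_eq {L : ℕ} {u v : Fin L} (h : u ≠ v) : ktFactor u v = Fk u v := by
  have e : (site Sz u * site Sx v) * (site Sz u * site Sx v) = site Pz u * site Px v := by
    rw [(site_comm Sx Sz h.symm).mul_mul_mul_comm, site_mul, site_mul, Sz_sq, Sx_sq]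
  unfold ktFactor Fk
  rw [exp_cube, e]
  rw [e, (site_comm Px Sz h.symm).mul_mul_mul_comm, site_mul, site_mul, Pz_Sz, Px_Sx]

theorem Fk_comm {L : ℕ} (u v u' v' : Fin L) : Commute (Fk u v) (Fk u' v') := by
  unfold Fk
  have h : Commute (site Pz u * site Px v) (site Pz u' * site Px v') :=
    ((site_self_comm Pz u u').mul_right (PzPx_comm u v')).mul_left
      ((PzPx_comm u' v).symm.mul_right (site_self_comm Px v v'))
  have h2 : ∀ X : Op L, Commute (2 : Op L) X := fun X => Commute.ofNat_left 2 X
  have h3 := ((h2 _).mul_left (((h2 _).symm).mul_right h) :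
    Commute (2 * (site Pz u * site Px v)) (2 * (site Pz u' * site Px v')))
  exact ((Commute.one_left _).sub_left ((Commute.one_right _).sub_right h3))

theorem Fk_sq {L : ℕ} (u v : Fin L) : Fk u v * Fk u v = 1 := by
  unfold Fk
  have e : (site Pz u * site Px v) * (site Pz u * site Px v) = site Pz u * site Px v := by
    rw [(PzPx_comm u v).symm.mul_mul_mul_comm, site_mul, site_mul, Pz_Pz, Px_Px]
  generalize site Pz u * site Px v = X at e
  have : (1 - 2 * X) * (1 - 2 * X) = 1 - 4 * X + 4 * (X * X) := by noncomm_ring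
  rw [this, e]
  noncomm_ring

theorem Fk_commute_site {L : ℕ} {u v j : Fin L} (A : Matrix (Fin 3) (Fin 3) ℂ)
    (h1 : u ≠ j) (h2 : v ≠ j) : Commute (Fk u v) (site A j) :=
  (Commute.one_left _).sub_left ((Commute.ofNat_left 2 _).mul_left
    ((site_comm _ _ h1).mul_left (site_comm _ _ h2)))

/-- `P A + A P` relation: `P` acts on `A` by exchange with `1 - P`, or trivially. -/
def Good (P A : Matrix (Fin 3) (Fin 3) ℂ) : Prop := P * A = A - A * P

/-- A pair `(A, B)` of one-site operators having the same parity with respect to `P`. -/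
def Par (P A : Matrix (Fin 3) (Fin 3) ℂ) : Prop := P * A = A - A * P ∨ P * A = A * P

theorem par_R {P A : Matrix (Fin 3) (Fin 3) ℂ} (h : Par P A) :
    ∃ e : ℂ, e * e = 1 ∧ (1 - 2 * P) * A = e • (A * (1 - 2 * P)) := by
  rcases h with h | h
  · refine ⟨-1, by norm_num, ?_⟩
    have : (1 - 2 * P) * A = A - 2 * (P * A) := by noncomm_ring
    rw [this, h]
    simp only [neg_smul, one_smul]
    noncomm_ring
  · refine ⟨1, by norm_num, ?_⟩
    have : (1 - 2 * P) * A = A - 2 * (P * A) := by noncomm_ring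
    rw [this, h]
    simp only [one_smul]
    noncomm_ring

theorem site_smul {L : ℕ} (c : ℂ) (A : Matrix (Fin 3) (Fin 3) ℂ) (j : Fin L) :
    site (c • A) j = c • site A j := by
  ext f g
  simp only [site_entry, Matrix.smul_apply, smul_eq_mul, mul_assoc]

theorem RR_commute {L : ℕ} {j k : Fin L} (hjk : j ≠ k) {P A : Matrix (Fin 3) (Fin 3) ℂ}
    (h : Par P A) :
    Commute (site (1 - 2 * P) j * site (1 - 2 * P) k) (site A j * site A k) := by
  obtain ⟨e, he, hR⟩ := par_R h
  unfold Commute SemiconjBy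
  rw [(site_comm _ _ hjk.symm).mul_mul_mul_comm, (site_comm _ _ hjk.symm).mul_mul_mul_comm,
    site_mul, site_mul, site_mul, site_mul, hR, site_smul, site_smul, smul_mul_smul_comm, he,
    one_smul]

theorem site_R {L : ℕ} (P : Matrix (Fin 3) (Fin 3) ℂ) (j : Fin L) :
    site (1 - 2 * P) j = 1 - 2 * site P j := by
  rw [site_sub, site_one, two_mul, site_add, two_mul]

theorem pair_ring {R : Type*} [Ring R] (p a b : R) (hp : p * p = p) (ha : Commute p a)
    (hb : Commute p b) :
    (1 - 2 * (p * a)) * (1 - 2 * (p * b)) = 1 - p * (1 - (1 - 2 * a) * (1 - 2 * b)) := by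
  have h1 : p * a * (p * b) = p * (a * b) := by
    rw [ha.symm.mul_mul_mul_comm, hp]
  have h2 : (1 - 2 * (p * a)) * (1 - 2 * (p * b)) =
    1 - 2 * (p * a) - 2 * (p * b) + 4 * (p * a * (p * b)) := by noncomm_ring
  rw [h2, h1]
  noncomm_ring

theorem col_commute {L : ℕ} {u j k : Fin L} (hjk : j ≠ k) (hj : u ≠ j) (hk : u ≠ k)
    {A : Matrix (Fin 3) (Fin 3) ℂ} (h : Par Px A) :
    Commute (Fk u j * Fk u k) (site A j * site A k) := by
  unfold Fk
  rw [pair_ring _ _ _ (by rw [site_mul, Pz_Pz]) (site_comm _ _ hj) (site_comm _ _ hk),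
    ← site_R, ← site_R]
  exact (Commute.one_left _).sub_left (((site_comm _ _ hj).mul_right (site_comm _ _ hk)).mul_left
    ((Commute.one_left _).sub_left (RR_commute hjk h)))

theorem row_commute {L : ℕ} {v j k : Fin L} (hjk : j ≠ k) (hj : v ≠ j) (hk : v ≠ k)
    {A : Matrix (Fin 3) (Fin 3) ℂ} (h : Par Pz A) :
    Commute (Fk j v * Fk k v) (site A j * site A k) := by
  unfold Fk
  rw [(site_comm Pz Px hj.symm).eq, (site_comm Pz Px hk.symm).eq,
    pair_ring _ _ _ (by rw [site_mul, Px_Px]) (site_comm _ _ hj) (site_comm _ _ hk),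
    ← site_R, ← site_R]
  exact (Commute.one_left _).sub_left (((site_comm _ _ hj).mul_right (site_comm _ _ hk)).mul_left
    ((Commute.one_left _).sub_left (RR_commute hjk h)))

theorem UKT_eq (L : ℕ) (j k : Fin L) (hk : (k : ℕ) = j + 1) :
    ∃ W : Op L, UKT L = Fk j k * W ∧ UKT L = W * Fk j k ∧ W * W = 1 ∧
      ∀ A, Par Px A → Par Pz A → Commute W (site A j * site A k) := by
  have hjk : j < k := by rw [Fin.lt_def]; omega
  have hne : j ≠ k := hjk.ne
  let s : Set (Op L) := Set.range fun p : Fin L × Fin L => Fk p.1 p.2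
  have hs : ∀ a ∈ s, ∀ b ∈ s, a * b = b * a := by
    rintro _ ⟨p, rfl⟩ _ ⟨q, rfl⟩
    exact Fk_comm _ _ _ _
  letI : CommMonoid (Submonoid.closure s) := Submonoid.closureCommMonoidOfComm _ hs
  let F : Fin L → Fin L → Submonoid.closure s := fun u v =>
    ⟨Fk u v, Submonoid.subset_closure ⟨(u, v), rfl⟩⟩
  have hFF : ∀ u v, F u v * F u v = 1 := fun u v => Subtype.ext (Fk_sq u v)
  let G : Fin L → Fin L → Submonoid.closure s := fun u v => if u < v then F u v else 1
  let H : Fin L → Fin L → Submonoid.closure s := fun u v =>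
    if u < v ∧ ¬ (u = j ∧ v = k) then F u v else 1
  have hU : UKT L = ((∏ u, ∏ v, G u v : Submonoid.closure s) : Op L) := by
    unfold UKT
    simp only [Fin.prod_univ_def]
    have hc : ∀ l : List (Submonoid.closure s), ((l.prod : Submonoid.closure s) : Op L) =
        (l.map (Submonoid.closure s).subtype).prod :=
      fun l => map_list_prod (Submonoid.closure s).subtype l
    rw [hc, List.map_map]
    congr 2
    funext u
    simp only [Function.comp_apply]
    refine Eq.trans ?_ (hc _).symm
    rw [List.map_map]
    congr 2
    funext v
    by_cases h : u < v
    · simp [G, F, h, ktFactor_eq h.ne]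
    · simp [G, h]
  have hGH : ∏ u, ∏ v, G u v = F j k * ∏ u, ∏ v, H u v := by
    have : ∀ u v, G u v = (if u = j then (if v = k then F j k else 1) else 1) * H u v := by
      intro u v
      by_cases h1 : u = j <;> by_cases h2 : v = k <;> simp [G, H, h1, h2, hjk]
    simp only [this, Finset.prod_mul_distrib]
    congr 1
    simp [Finset.prod_ite_eq']
  have hHH : (∏ u, ∏ v, H u v) * (∏ u, ∏ v, H u v) = 1 := by
    simp only [← Finset.prod_mul_distrib]
    refine Finset.prod_eq_one fun u _ => Finset.prod_eq_one fun v _ => ?_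
    simp only [H]
    split_ifs
    · exact hFF u v
    · exact one_mul 1
  refine ⟨((∏ u, ∏ v, H u v : Submonoid.closure s) : Op L), ?_, ?_, ?_, ?_⟩
  · rw [hU, hGH]; rfl
  · rw [hU, hGH, mul_comm]; rfl
  · exact congrArg Subtype.val hHH
  · intro A hx hz
    let M : Submonoid (Submonoid.closure s) :=
      (Submonoid.centralizer {site A j * site A k}).comap (Submonoid.closure s).subtype
    have memM : ∀ x : Submonoid.closure s, x ∈ M ↔ Commute (x : Op L) (site A j * site A k) := by
      intro x
      simp [M, Submonoid.mem_centralizer_iff, Commute, SemiconjBy, eq_comm]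
    rw [← memM]
    have hsplit : ∏ u, ∏ v, H u v =
        (∏ v, (H j v * H k v)) * ∏ u ∈ (Finset.univ.erase j).erase k, ∏ v, H u v := by
      rw [Finset.prod_mul_distrib, ← Finset.mul_prod_erase _ _ (Finset.mem_univ j),
        ← Finset.mul_prod_erase (Finset.univ.erase j) _ (Finset.mem_erase.2
          ⟨hne.symm, Finset.mem_univ k⟩), mul_assoc]
    have hsingle : ∀ u v, u ≠ j → u ≠ k → v ≠ j → v ≠ k → F u v ∈ M := by
      intro u v h1 h2 h3 h4
      rw [memM]
      exact (Fk_commute_site A h1 h3).mul_right (Fk_commute_site A h2 h4)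
    rw [hsplit]
    refine M.mul_mem (M.prod_mem fun v _ => ?_) (M.prod_mem fun u hu => ?_)
    · by_cases hv : k < v
      · have e : H j v * H k v = F j v * F k v := by
          simp [H, hv, hjk.trans hv, hv.ne']
        rw [e, memM]
        exact row_commute hne (hjk.trans hv).ne' hv.ne' hz
      · have e1 : H k v = 1 := by simp [H, hv]
        have e2 : H j v = 1 := by
          have : ¬ (j < v ∧ v ≠ k) := by
            rintro ⟨h1, h2⟩
            rw [Fin.lt_def] at h1 hv
            apply h2; ext; omega
          simp only [H]
          rw [if_neg]
          simpa using this
        rw [e1, e2, one_mul]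
        exact M.one_mem
    · simp only [Finset.mem_erase, Finset.mem_univ, and_true] at hu
      obtain ⟨huk, huj⟩ := hu
      rw [← Finset.mul_prod_erase _ _ (Finset.mem_univ j),
        ← Finset.mul_prod_erase (Finset.univ.erase j) _ (Finset.mem_erase.2
          ⟨hne.symm, Finset.mem_univ k⟩), ← mul_assoc]
      refine M.mul_mem ?_ (M.prod_mem fun v hv => ?_)
      · by_cases h : u < j
        · have e : H u j * H u k = F u j * F u k := by
            simp [H, h, h.trans hjk, huj]
          rw [e, memM]
          exact col_commute hne huj huk hx
        · have h' : ¬ u < k := by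
            intro h2
            rw [Fin.lt_def] at h h2
            apply huj; ext; omega
          have e : H u j * H u k = 1 := by simp [H, h, h']
          rw [e]; exact M.one_mem
      · simp only [Finset.mem_erase, Finset.mem_univ, and_true] at hv
        simp only [H]
        split_ifs
        · exact hsingle u v huj huk hv.2 hv.1
        · exact M.one_mem

theorem F_conj {L : ℕ} {j k : Fin L} (h : j ≠ k) (A B : Matrix (Fin 3) (Fin 3) ℂ) :
    Fk j k * (site A j * site B k) * Fk j k =
      site A j * site B k - 2 * (site (Pz * A) j * site (Px * B) k)
        - 2 * (site (A * Pz) j * site (B * Px) k)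
        + 4 * (site (Pz * A * Pz) j * site (Px * B * Px) k) := by
  have two : ∀ A B C D : Matrix (Fin 3) (Fin 3) ℂ, site (A * C) j * site (B * D) k =
      (site A j * site B k) * (site C j * site D k) := by
    intro A B C D
    rw [(site_comm _ _ h.symm).mul_mul_mul_comm, site_mul, site_mul]
  simp only [two, Fk]
  noncomm_ring


/-- Conjugation by the Kennedy–Tasaki transformation maps the Heisenberg bond to
`−Sˣ_jSˣ_{j+1} + Sʸ_j exp(iπ(Sᶻ_j + Sˣ_{j+1})) Sʸ_{j+1} − Sᶻ_jSᶻ_{j+1}`. -/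
theorem UKT_heisenberg_bond (L : ℕ) (hL : 2 ≤ L) (j : Fin L) (hj : (j : ℕ) + 1 < L) :
    UKT L * heis j ⟨(j : ℕ) + 1, hj⟩ * UKT L =
      -(site Sx j * site Sx ⟨(j : ℕ) + 1, hj⟩)
        + site Sy j *
            NormedSpace.exp (((Real.pi : ℂ) * I) • (site Sz j + site Sx ⟨(j : ℕ) + 1, hj⟩)) *
            site Sy ⟨(j : ℕ) + 1, hj⟩
        - site Sz j * site Sz ⟨(j : ℕ) + 1, hj⟩ := by
  set k : Fin L := ⟨(j : ℕ) + 1, hj⟩ with hk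
  have hne : j ≠ k := by
    intro h
    have := congrArg Fin.val h
    simp [hk] at this
  obtain ⟨W, hU1, hU2, hWW, hW⟩ := UKT_eq L j k rfl
  have conj : ∀ A, Par Px A → Par Pz A →
      UKT L * (site A j * site A k) * UKT L = Fk j k * (site A j * site A k) * Fk j k := by
    intro A hx hz
    calc UKT L * (site A j * site A k) * UKT L
        = (Fk j k * W) * (site A j * site A k) * (W * Fk j k) := by rw [← hU1, ← hU2]
      _ = Fk j k * (W * (site A j * site A k)) * W * Fk j k := by simp only [mul_assoc]
      _ = Fk j k * (site A j * site A k) * (W * W) * Fk j k := by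
          rw [(hW A hx hz).eq]; simp only [mul_assoc]
      _ = _ := by rw [hWW, mul_one]
  have hexp : NormedSpace.exp (((Real.pi : ℂ) * I) • (site Sz j + site Sx k)) =
      site (1 - 2 * Pz) j * site (1 - 2 * Px) k := by
    rw [smul_add, Matrix.exp_add_of_commute _ _
      (((site_comm Sz Sx hne).smul_left _).smul_right _), exp_cube, exp_cube, site_mul, site_mul,
      Sz_sq, Sx_sq, site_R, site_R]
    · rw [site_mul, site_mul, Sx_sq, Px_Sx]
    · rw [site_mul, site_mul, Sz_sq, Pz_Sz]
  have cx := conj Sx (Or.inr (by rw [Px_Sx, Sx_Px])) (Or.inl Pz_Sx)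
  have cy := conj Sy (Or.inl Px_Sy) (Or.inl Pz_Sy)
  have cz := conj Sz (Or.inl Px_Sz) (Or.inr (by rw [Pz_Sz, Sz_Pz]))
  have hx0 : Pz * Sx * Pz = 0 := by rw [Pz_Sx, sub_mul, mul_assoc, Pz_Pz, sub_self]
  have hy0 : Pz * Sy * Pz = 0 := by rw [Pz_Sy, sub_mul, mul_assoc, Pz_Pz, sub_self]
  have hz0 : Px * Sz * Px = 0 := by rw [Px_Sz, sub_mul, mul_assoc, Px_Px, sub_self]
  have s0 : ∀ i : Fin L, site 0 i = (0 : Op L) := by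
    intro i
    ext f g
    simp [site_entry]
  rw [F_conj hne, hx0, Pz_Sx, Px_Sx, Sx_Px, s0, site_sub] at cx
  rw [F_conj hne, hy0, Pz_Sy, Px_Sy, s0, site_sub, site_sub] at cy
  rw [F_conj hne, hz0, Px_Sz, Pz_Sz, Sz_Pz, s0, site_sub] at cz
  have hR : site Sy j * NormedSpace.exp (((Real.pi : ℂ) * I) • (site Sz j + site Sx k)) * site Sy k
      = (site Sy j - 2 * site (Sy * Pz) j) * (site Sy k - 2 * (site Sy k - site (Sy * Px) k)) := by
    rw [hexp, ← mul_assoc, mul_assoc, site_mul, site_mul, mul_sub, sub_mul, two_mul, two_mul,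
      mul_add, add_mul, Px_Sy]
    simp only [site_sub, site_add, mul_one, one_mul]
    noncomm_ring
  rw [hR]
  unfold heis
  rw [mul_add, mul_add, add_mul, add_mul, cx, cy, cz]
  noncomm_ring

end
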